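/- There exist absolute constants X > 0 and M > 0 such that for all integers q₁, q₂ > 1, all primitive quadratic Dirichlet characters χ₁ mod q₁ and χ₂ mod q₂, every real w with 0 < w < 1, and every real x ≥ X, the (convergent) integral J(x,w) = (1/2π)·∫_{−∞}^{∞} f(2 + w + it)·x^(2+it) / ((2+it)(3+it)(4+it)(5+it)(6+it)) dt has real part at least M. -/

import Mathlib

/-!
Write `f(s) = ∑ a(n) n⁻ˢ`. Minus the logarithmic derivative of `f` has coefficients
`Λ(n)(1 + χ₁(n))(1 + χ₂(n)) ≥ 0`, so the recursion `a · log = (Λ(1 + χ₁)(1 + χ₂)) * a` propagates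
nonnegativity from `a(1) = 1` to all `a(n)`. The function `1 / (s(s+1)(s+2)(s+3)(s+4))` is the
Mellin transform of `(1 - u)₊⁴ / 4!`, hence Mellin inversion, applied term by term, gives
`J(x,w) = ∑ a(n) n⁻ʷ (1 - n/x)₊⁴ / 4!`. All terms are nonnegative, and for `x ≥ 2` the term `n = 1`
alone is at least `(1/2)⁴ / 4! = 1/384`.
-/

open DirichletCharacter MeasureTheory Complex

/-- `f(s) = ζ(s) L(s,χ₁) L(s,χ₂) L(s,χ₁χ₂)`, where `χ₁χ₂` is the Dirichlet character
mod `q₁ q₂` given by `n ↦ χ₁(n) χ₂(n)`. -/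
noncomputable def goldfeldF {q₁ q₂ : ℕ} [NeZero q₁] [NeZero q₂]
    (χ₁ : DirichletCharacter ℂ q₁) (χ₂ : DirichletCharacter ℂ q₂) (s : ℂ) : ℂ :=
  riemannZeta s * χ₁.LFunction s * χ₂.LFunction s *
    (changeLevel (dvd_mul_right q₁ q₂) χ₁ * changeLevel (dvd_mul_left q₂ q₁) χ₂).LFunction s

section LogarithmicDerivative

open ArithmeticFunction ComplexOrder

/-- The Dirichlet series `G` of `g` is minus the logarithmic derivative of the Dirichlet series `F`
of `f`. This is encoded by comparing the coefficients of `-dF/ds = G F`, so no convergence is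
involved. -/
def HasLogDeriv (f g : ArithmeticFunction ℂ) : Prop :=
  ∀ n : ℕ, f n * Complex.log n = (g * f) n

namespace HasLogDeriv

variable {f₁ f₂ g₁ g₂ f g : ArithmeticFunction ℂ}

lemma mul (h₁ : HasLogDeriv f₁ g₁) (h₂ : HasLogDeriv f₂ g₂) :
    HasLogDeriv (f₁ * f₂) (g₁ + g₂) := by
  intro n
  have leibniz : (f₁ * f₂) n * Complex.log n = (g₁ * f₁ * f₂) n + (f₁ * (g₂ * f₂)) n := by
    simp only [mul_apply (f := f₁), mul_apply (f := g₁ * f₁), Finset.sum_mul,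
      ← Finset.sum_add_distrib]
    refine Finset.sum_congr rfl fun p hp ↦ ?_
    obtain ⟨hp₁, hp₂⟩ := Nat.ne_zero_of_mem_divisorsAntidiagonal hp
    have log_mul : Complex.log n = Complex.log p.1 + Complex.log p.2 := by
      rw [← (Nat.mem_divisorsAntidiagonal.mp hp).1]
      simp only [← natCast_log]
      rw [Nat.cast_mul, Real.log_mul (Nat.cast_ne_zero.mpr hp₁) (Nat.cast_ne_zero.mpr hp₂),
        ofReal_add]
    rw [← h₁ p.1, ← h₂ p.2, log_mul]
    ring
  rw [leibniz, ← ArithmeticFunction.add_apply]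
  congr 1
  ring

lemma map_one_eq_zero (h : HasLogDeriv f g) (hf : f 1 ≠ 0) : g 1 = 0 := by
  simpa [hf] using (h 1).symm

lemma nonneg (h : HasLogDeriv f g) (hf : 0 < f 1) (hg : ∀ n, 0 ≤ g n) (n : ℕ) : 0 ≤ f n := by
  induction n using Nat.strong_induction_on with
  | h n ih =>
    rcases n.eq_zero_or_pos with rfl | hn
    · simp
    rcases (Nat.succ_le_of_lt hn).eq_or_lt with rfl | hn₁
    · exact hf.le
    have hlog : (0 : ℂ) < Complex.log n := by
      rw [← natCast_log]
      exact_mod_cast Real.log_pos (Nat.one_lt_cast.mpr hn₁)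
    rw [eq_div_of_mul_eq hlog.ne' (h n), mul_apply]
    refine div_nonneg (Finset.sum_nonneg fun p hp ↦ ?_) hlog.le
    rcases eq_or_ne p.1 1 with hp₁ | hp₁
    · simp [hp₁, h.map_one_eq_zero hf.ne']
    · refine mul_nonneg (hg _) (ih _ ?_)
      obtain ⟨hpn, -⟩ := Nat.mem_divisorsAntidiagonal.mp hp
      obtain ⟨hp₀, hp₂⟩ := Nat.ne_zero_of_mem_divisorsAntidiagonal hp
      rw [← hpn]
      exact lt_mul_of_one_lt_left (Nat.pos_of_ne_zero hp₂) (by omega)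

end HasLogDeriv

lemma hasLogDeriv_dirichletCharacter {N : ℕ} (χ : DirichletCharacter ℂ N) :
    HasLogDeriv (toArithmeticFunction (χ ·)) (toArithmeticFunction fun n ↦ χ n * Λ n) := by
  intro n
  rcases eq_or_ne n 0 with rfl | hn
  · simp
  · rw [← χ.apply_eq_toArithmeticFunction_apply hn]
    exact (congrFun χ.convolution_twist_vonMangoldt n).symm

end LogarithmicDerivative

section GoldfeldCoefficients

open ArithmeticFunction ComplexOrder

lemma changeLevel_mul_changeLevel_natCast {R : Type*} [CommMonoidWithZero R] {q₁ q₂ : ℕ}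
    (χ₁ : DirichletCharacter R q₁) (χ₂ : DirichletCharacter R q₂) (n : ℕ) :
    (changeLevel (dvd_mul_right q₁ q₂) χ₁ * changeLevel (dvd_mul_left q₂ q₁) χ₂) n =
      χ₁ n * χ₂ n := by
  by_cases hn : n.Coprime (q₁ * q₂)
  · have hn' : IsCoprime (n : ℤ) ↑(q₁ * q₂) := Nat.isCoprime_iff_coprime.mpr hn
    simpa using congrArg₂ (· * ·) (changeLevel_eq_cast_of_dvd' χ₁ (dvd_mul_right q₁ q₂) hn')
      (changeLevel_eq_cast_of_dvd' χ₂ (dvd_mul_left q₂ q₁) hn')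
  · rw [MulChar.map_nonunit _ (mt (ZMod.isUnit_iff_coprime _ _).mp hn)]
    rw [Nat.coprime_mul_iff_right, not_and_or] at hn
    rcases hn with hn | hn
    · rw [MulChar.map_nonunit χ₁ (mt (ZMod.isUnit_iff_coprime _ _).mp hn), zero_mul]
    · rw [MulChar.map_nonunit χ₂ (mt (ZMod.isUnit_iff_coprime _ _).mp hn), mul_zero]

lemma one_add_nonneg_of_sq_eq_one {N : ℕ} {χ : DirichletCharacter ℂ N} (hχ : χ ^ 2 = 1)
    (a : ZMod N) : 0 ≤ 1 + χ a := by
  rcases MulChar.isQuadratic_iff_sq_eq_one.mpr hχ a with h | h | h <;> simp [h]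
  norm_num

lemma LSeriesHasSum_toArithmeticFunction_dirichletCharacter {N : ℕ} [NeZero N]
    (χ : DirichletCharacter ℂ N) {s : ℂ} (hs : 1 < s.re) :
    LSeriesHasSum (toArithmeticFunction (χ ·)) s (χ.LFunction s) := by
  refine (LSeriesHasSum_congr s _ fun hn ↦ χ.apply_eq_toArithmeticFunction_apply hn).mp ?_
  rw [χ.LFunction_eq_LSeries hs]
  exact (χ.LSeriesSummable_of_one_lt_re hs).LSeriesHasSum

variable {q₁ q₂ : ℕ} (χ₁ : DirichletCharacter ℂ q₁) (χ₂ : DirichletCharacter ℂ q₂)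

/-- The Dirichlet coefficients of `goldfeldF χ₁ χ₂`; the first factor, the character modulo `1`,
accounts for `ζ`. -/
noncomputable def goldfeldCoeff : ArithmeticFunction ℂ :=
  toArithmeticFunction ((1 : DirichletCharacter ℂ 1) ·) * toArithmeticFunction (χ₁ ·) *
    toArithmeticFunction (χ₂ ·) * toArithmeticFunction
      ((changeLevel (dvd_mul_right q₁ q₂) χ₁ * changeLevel (dvd_mul_left q₂ q₁) χ₂) ·)

lemma goldfeldCoeff_one : goldfeldCoeff χ₁ χ₂ 1 = 1 := by
  simp only [goldfeldCoeff, mul_apply_one, (isMultiplicative_toArithmeticFunction _).map_one,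
    mul_one]

variable {χ₁ χ₂} in
lemma goldfeldCoeff_nonneg (h₁ : χ₁ ^ 2 = 1) (h₂ : χ₂ ^ 2 = 1) (n : ℕ) :
    0 ≤ goldfeldCoeff χ₁ χ₂ n := by
  refine ((((hasLogDeriv_dirichletCharacter _).mul (hasLogDeriv_dirichletCharacter _)).mul
    (hasLogDeriv_dirichletCharacter _)).mul (hasLogDeriv_dirichletCharacter _)).nonneg
    (by rw [← goldfeldCoeff, goldfeldCoeff_one]; exact one_pos) (fun m ↦ ?_) n
  rcases eq_or_ne m 0 with rfl | hm
  · simp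
  have hΛ : (0 : ℂ) ≤ Λ m := by exact_mod_cast vonMangoldt_nonneg
  calc (0 : ℂ) ≤ (1 + χ₁ m) * (1 + χ₂ m) * Λ m :=
        mul_nonneg (mul_nonneg (one_add_nonneg_of_sq_eq_one h₁ m)
          (one_add_nonneg_of_sq_eq_one h₂ m)) hΛ
    _ = _ := by
        rw [ArithmeticFunction.add_apply, ArithmeticFunction.add_apply,
          ArithmeticFunction.add_apply]
        simp only [toArithmeticFunction, coe_mk, if_neg hm, changeLevel_mul_changeLevel_natCast,
          MulChar.one_apply (isUnit_of_subsingleton _)]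
        ring

lemma LSeriesHasSum_goldfeldCoeff [NeZero q₁] [NeZero q₂] {s : ℂ} (hs : 1 < s.re) :
    LSeriesHasSum (goldfeldCoeff χ₁ χ₂) s (goldfeldF χ₁ χ₂ s) := by
  have hζ := LSeriesHasSum_toArithmeticFunction_dirichletCharacter (1 : DirichletCharacter ℂ 1) hs
  rw [LFunction_modOne_eq] at hζ
  exact LSeriesHasSum_mul (LSeriesHasSum_mul (LSeriesHasSum_mul hζ
    (LSeriesHasSum_toArithmeticFunction_dirichletCharacter χ₁ hs))
    (LSeriesHasSum_toArithmeticFunction_dirichletCharacter χ₂ hs))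
    (LSeriesHasSum_toArithmeticFunction_dirichletCharacter _ hs)

end GoldfeldCoefficients

section InverseMellin

open LSeries

variable {a : ℕ → ℂ} {w : ℂ} {c : ℝ}

lemma norm_LSeries_term_add_vertical (a : ℕ → ℂ) (w : ℂ) (c t : ℝ) (n : ℕ) :
    ‖term a (w + (c + t * I)) n‖ = ‖term a (w + c) n‖ := by
  simp [norm_term_eq]

lemma continuous_LSeries_term (a : ℕ → ℂ) (n : ℕ) : Continuous fun s ↦ term a s n :=
  continuous_iff_continuousAt.mpr fun s ↦ (hasDerivAt_term a n s).continuousAt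

lemma continuous_LSeries_vertical (ha : LSeriesSummable a (w + c)) :
    Continuous fun t : ℝ ↦ LSeries a (w + (c + t * I)) :=
  continuous_tsum (fun n ↦ (continuous_LSeries_term a n).comp (by fun_prop)) ha.norm
    fun n t ↦ (norm_LSeries_term_add_vertical a w c t n).le

lemma norm_LSeries_vertical_le (ha : LSeriesSummable a (w + c)) (t : ℝ) :
    ‖LSeries a (w + (c + t * I))‖ ≤ ∑' n, ‖term a (w + c) n‖ :=
  tsum_of_norm_bounded ha.norm.hasSum fun n ↦ (norm_LSeries_term_add_vertical a w c t n).le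

variable {G : ℂ → ℂ}

lemma verticalIntegrable_LSeries_mul (ha : LSeriesSummable a (w + c))
    (hG : VerticalIntegrable G c) : VerticalIntegrable (fun s ↦ LSeries a (w + s) * G s) c :=
  Integrable.bdd_mul hG (continuous_LSeries_vertical ha).aestronglyMeasurable
    (.of_forall (norm_LSeries_vertical_le ha))

lemma verticalIntegrable_LSeries_term_mul (a : ℕ → ℂ) (w : ℂ) (n : ℕ)
    (hG : VerticalIntegrable G c) : VerticalIntegrable (fun s ↦ term a (w + s) n * G s) c :=
  Integrable.bdd_mul hG
    ((continuous_LSeries_term a n).comp (by fun_prop)).aestronglyMeasurable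
    (.of_forall fun t ↦ (norm_LSeries_term_add_vertical a w c t n).le)

variable {y : ℝ}

lemma norm_cpow_neg_vertical (hy : 0 < y) (c t : ℝ) : ‖(y : ℂ) ^ (-(c + t * I))‖ = y ^ (-c) := by
  simp [norm_cpow_eq_rpow_re_of_pos hy]

lemma integrable_cpow_neg_smul (hG : VerticalIntegrable G c) (hy : 0 < y) :
    Integrable fun t : ℝ ↦ (y : ℂ) ^ (-(c + t * I)) • G (c + t * I) := by
  refine Integrable.bdd_smul hG (y ^ (-c)) (Continuous.aestronglyMeasurable ?_)
    (.of_forall fun t ↦ (norm_cpow_neg_vertical hy c t).le)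
  exact Continuous.const_cpow (by fun_prop) (.inl (ofReal_ne_zero.mpr hy.ne'))

lemma cpow_neg_mul_LSeries_term (a : ℕ → ℂ) (w s : ℂ) (n : ℕ) (hy : 0 ≤ y) :
    (y : ℂ) ^ (-s) * term a (w + s) n = term a w n * ((n * y : ℝ) : ℂ) ^ (-s) := by
  rcases eq_or_ne n 0 with rfl | hn
  · simp
  rw [term_of_ne_zero hn, term_of_ne_zero hn, ofReal_mul,
    mul_cpow_ofReal_nonneg n.cast_nonneg hy, ofReal_natCast,
    cpow_add _ _ (Nat.cast_ne_zero.mpr hn), cpow_neg (n : ℂ)]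
  ring

lemma mellinInv_LSeries_term_mul (a : ℕ → ℂ) (w : ℂ) (n : ℕ) (hy : 0 ≤ y) :
    mellinInv c (fun s ↦ term a (w + s) n * G s) y = term a w n * mellinInv c G (n * y) := by
  simp only [mellinInv, smul_eq_mul, ← mul_assoc, cpow_neg_mul_LSeries_term a w _ n hy]
  simp only [mul_assoc, integral_const_mul, mul_smul_comm]

theorem hasSum_LSeries_term_mul_mellinInv (ha : LSeriesSummable a (w + c))
    (hG : VerticalIntegrable G c) (hy : 0 < y) :
    HasSum (fun n : ℕ ↦ term a w n * mellinInv c G (n * y))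
      (mellinInv c (fun s ↦ LSeries a (w + s) * G s) y) := by
  have hsum : Summable fun n ↦
      ∫ t : ℝ, ‖(y : ℂ) ^ (-(c + t * I)) • (term a (w + (c + t * I)) n * G (c + t * I))‖ := by
    simp only [norm_smul, norm_mul, norm_cpow_neg_vertical hy, norm_LSeries_term_add_vertical,
      integral_const_mul]
    exact (ha.norm.mul_right _).mul_left _
  have hswap := (hasSum_integral_of_summable_integral_norm (fun n ↦
    integrable_cpow_neg_smul (verticalIntegrable_LSeries_term_mul a w n hG) hy) hsum).const_smul
    (1 / (2 * Real.pi))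
  simp only [← mellinInv_LSeries_term_mul a w _ hy.le]
  simpa only [mellinInv, LSeries, tsum_mul_right, tsum_const_smul''] using hswap

theorem hasSum_LSeries_term_mul {φ : ℝ → ℂ} (ha : LSeriesSummable a (w + c))
    (hφ : MellinConvergent φ c) (hφ' : VerticalIntegrable (mellin φ) c)
    (hcont : ContinuousOn φ (Set.Ioi 0)) (hy : 0 < y) :
    HasSum (fun n : ℕ ↦ term a w n * φ (n * y))
      (mellinInv c (fun s ↦ LSeries a (w + s) * mellin φ s) y) := by
  refine (hasSum_LSeries_term_mul_mellinInv ha hφ' hy).congr_fun fun n ↦ ?_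
  rcases eq_or_ne n 0 with rfl | hn
  · simp
  have hny : 0 < n * y := mul_pos (Nat.cast_pos.mpr (Nat.pos_of_ne_zero hn)) hy
  rw [mellinInv_mellin_eq c φ hny hφ hφ' (hcont.continuousAt (Ioi_mem_nhds hny))]

end InverseMellin

section RieszKernel

open scoped Nat

/-- The kernel `(1 - u)₊ᵏ / k!` of Riesz means of order `k`. For `k = 0` it is the constant `1`
rather than the indicator function of `u ≤ 1`. -/
noncomputable def rieszKernel (k : ℕ) (u : ℝ) : ℝ := max (1 - u) 0 ^ k / k !

lemma rieszKernel_nonneg (k : ℕ) (u : ℝ) : 0 ≤ rieszKernel k u := by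
  unfold rieszKernel
  positivity

lemma antitone_rieszKernel (k : ℕ) : Antitone (rieszKernel k) := by
  intro u v huv
  unfold rieszKernel
  gcongr

lemma continuous_rieszKernel (k : ℕ) : Continuous (rieszKernel k) := by
  unfold rieszKernel
  fun_prop

variable {k : ℕ}

lemma indicator_cpow_smul_rieszKernel (hk : k ≠ 0) (s : ℂ) :
    (Set.Ioi (0 : ℝ)).indicator (fun u : ℝ ↦ (u : ℂ) ^ (s - 1) • (rieszKernel k u : ℂ)) =
      (Set.Ioc (0 : ℝ) 1).indicator fun u : ℝ ↦
        (u : ℂ) ^ (s - 1) * (1 - (u : ℂ)) ^ ((k + 1 : ℂ) - 1) / k ! := by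
  ext u
  rcases le_or_gt u 0 with hu | hu
  · simp [hu.not_gt]
  rcases le_or_gt u 1 with hu₁ | hu₁
  · simp [hu, hu₁, rieszKernel, mul_div_assoc]
  · simp [hu, hu₁.not_ge, rieszKernel, hu₁.le, hk]

lemma hasMellin_rieszKernel (hk : k ≠ 0) {s : ℂ} (hs : 0 < s.re) :
    HasMellin (fun u ↦ (rieszKernel k u : ℂ)) s (∏ j ∈ Finset.range (k + 1), (s + j))⁻¹ := by
  constructor
  · have hconv := betaIntegral_convergent (v := k + 1) hs
      (by rw [add_re, natCast_re, one_re]; positivity)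
    rw [intervalIntegrable_iff_integrableOn_Ioc_of_le zero_le_one] at hconv
    rw [MellinConvergent, ← integrable_indicator_iff measurableSet_Ioi,
      indicator_cpow_smul_rieszKernel hk, integrable_indicator_iff measurableSet_Ioc]
    exact hconv.div_const _
  · have hbeta := betaIntegral_eval_nat_add_one_right hs k
    rw [betaIntegral, intervalIntegral.integral_of_le zero_le_one] at hbeta
    rw [mellin, ← integral_indicator measurableSet_Ioi, indicator_cpow_smul_rieszKernel hk,
      integral_indicator measurableSet_Ioc, integral_div, hbeta, div_div_cancel_left'
        (Nat.cast_ne_zero.mpr k.factorial_ne_zero)]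

lemma sq_norm_le_norm_prod_add_natCast (hk : k ≠ 0) {s : ℂ} (hs : 0 ≤ s.re) :
    ‖s‖ ^ 2 ≤ ‖∏ j ∈ Finset.range (k + 1), (s + j)‖ := by
  have re_add (j : ℕ) : (s + j).re = s.re + j := by simp
  induction k, Nat.one_le_iff_ne_zero.mpr hk using Nat.le_induction with
  | base =>
    have hle : ‖s‖ ≤ ‖s + 1‖ := by
      rw [← sq_le_sq₀ (norm_nonneg _) (norm_nonneg _), Complex.sq_norm, Complex.sq_norm,
        normSq_apply, normSq_apply]
      simp only [add_re, one_re, add_im, one_im]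
      nlinarith
    simpa [Finset.prod_range_succ, sq] using mul_le_mul_of_nonneg_left hle (norm_nonneg s)
  | succ k hk ih =>
    have hone : 1 ≤ ‖s + (k + 1 : ℕ)‖ := by
      refine le_trans ?_ (re_le_norm _)
      rw [re_add, Nat.cast_add_one]
      linarith [k.cast_nonneg (α := ℝ)]
    rw [Finset.prod_range_succ, norm_mul]
    exact (ih (by omega)).trans (le_mul_of_one_le_right (norm_nonneg _) hone)

lemma integrable_inv_sq_add_sq {c : ℝ} (hc : c ≠ 0) :
    Integrable fun t : ℝ ↦ (c ^ 2 + t ^ 2)⁻¹ := by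
  refine ((integrable_inv_one_add_sq.comp_div hc).const_mul (c ^ 2)⁻¹).congr
    (.of_forall fun t ↦ ?_)
  simp only
  rw [← mul_inv]
  field_simp

lemma verticalIntegrable_inv_prod_add_natCast (hk : k ≠ 0) {c : ℝ} (hc : 0 < c) :
    VerticalIntegrable (fun s ↦ (∏ j ∈ Finset.range (k + 1), (s + j))⁻¹) c := by
  have hre (t : ℝ) : 0 < (c + t * I : ℂ).re := by simpa
  have norm_sq (t : ℝ) : ‖(c + t * I : ℂ)‖ ^ 2 = c ^ 2 + t ^ 2 := by
    rw [Complex.sq_norm, normSq_add_mul_I]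
  have hle (t : ℝ) :
      c ^ 2 + t ^ 2 ≤ ‖∏ j ∈ Finset.range (k + 1), ((c + t * I : ℂ) + j)‖ := by
    rw [← norm_sq]
    exact sq_norm_le_norm_prod_add_natCast hk (hre t).le
  have hpos (t : ℝ) : 0 < c ^ 2 + t ^ 2 := by positivity
  refine (integrable_inv_sq_add_sq hc.ne').mono' (Continuous.aestronglyMeasurable ?_)
    (.of_forall fun t ↦ ?_)
  · exact Continuous.inv₀ (by fun_prop) fun t ↦ norm_pos_iff.mp ((hpos t).trans_le (hle t))
  · rw [norm_inv]
    exact inv_anti₀ (hpos t) (hle t)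

lemma verticalIntegrable_mellin_rieszKernel (hk : k ≠ 0) {c : ℝ} (hc : 0 < c) :
    VerticalIntegrable (mellin fun u ↦ (rieszKernel k u : ℂ)) c := by
  refine (verticalIntegrable_inv_prod_add_natCast hk hc).congr (.of_forall fun t ↦ ?_)
  exact (hasMellin_rieszKernel hk (by simpa)).2.symm

end RieszKernel

section GoldfeldIntegral

open ComplexOrder

variable {q₁ q₂ : ℕ} [NeZero q₁] [NeZero q₂]

/-- The integrand of `J(x,w)`, as a function of the height `t` on the line `Re s = 2`. -/
noncomputable def goldfeldIntegrand (χ₁ : DirichletCharacter ℂ q₁) (χ₂ : DirichletCharacter ℂ q₂)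
    (w x t : ℝ) : ℂ :=
  goldfeldF χ₁ χ₂ (2 + (w : ℂ) + t * I) * (x : ℂ) ^ (2 + t * I) /
    ((2 + t * I) * (3 + t * I) * (4 + t * I) * (5 + t * I) * (6 + t * I))

variable {w x : ℝ}

lemma goldfeldIntegrand_eq (χ₁ : DirichletCharacter ℂ q₁) (χ₂ : DirichletCharacter ℂ q₂)
    (hw : -1 < w) (hx : 0 ≤ x) (t : ℝ) :
    goldfeldIntegrand χ₁ χ₂ w x t = ((x⁻¹ : ℝ) : ℂ) ^ (-((2 : ℝ) + t * I)) •
      (LSeries (goldfeldCoeff χ₁ χ₂) (w + ((2 : ℝ) + t * I)) *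
        mellin (fun u ↦ (rieszKernel 4 u : ℂ)) ((2 : ℝ) + t * I)) := by
  have hs : 1 < (w + ((2 : ℝ) + t * I) : ℂ).re := by simp; linarith
  have hcpow : ((x⁻¹ : ℝ) : ℂ) ^ (-((2 : ℝ) + t * I)) = (x : ℂ) ^ ((2 : ℝ) + t * I) := by
    have harg : (x : ℂ).arg ≠ Real.pi := by simp [arg_ofReal_of_nonneg hx, Real.pi_ne_zero.symm]
    rw [ofReal_inv, inv_cpow _ _ harg, cpow_neg, inv_inv]
  rw [hcpow, (LSeriesHasSum_goldfeldCoeff χ₁ χ₂ hs).LSeries_eq,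
    (hasMellin_rieszKernel four_ne_zero (by simp)).2, goldfeldIntegrand, smul_eq_mul,
    div_eq_mul_inv]
  have hprod : ∏ j ∈ Finset.range (4 + 1), (((2 : ℝ) + t * I : ℂ) + j) =
      (2 + t * I) * (3 + t * I) * (4 + t * I) * (5 + t * I) * (6 + t * I) := by
    simp only [Finset.prod_range_succ, Finset.prod_range_zero]
    push_cast
    ring
  rw [hprod, ofReal_ofNat, add_left_comm (w : ℂ), ← add_assoc (2 : ℂ)]
  ring

theorem goldfeldJ_lower_bound_general {χ₁ : DirichletCharacter ℂ q₁} {χ₂ : DirichletCharacter ℂ q₂}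
    (h₁ : χ₁ ^ 2 = 1) (h₂ : χ₂ ^ 2 = 1) (hw : -1 < w) (hx : 2 ≤ x) :
    Integrable (goldfeldIntegrand χ₁ χ₂ w x) ∧
      1 / 384 ≤ ((1 / (2 * (Real.pi : ℂ))) * ∫ t : ℝ, goldfeldIntegrand χ₁ χ₂ w x t).re := by
  have hx₀ : 0 < x := by linarith
  have ha : LSeriesSummable (goldfeldCoeff χ₁ χ₂) (w + (2 : ℝ)) :=
    (LSeriesHasSum_goldfeldCoeff χ₁ χ₂ (by simp; linarith)).LSeriesSummable
  have hφ := verticalIntegrable_mellin_rieszKernel four_ne_zero (two_pos (α := ℝ))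
  have hJ := hasSum_LSeries_term_mul ha (hasMellin_rieszKernel four_ne_zero (by simp)).1 hφ
    (continuous_ofReal.comp (continuous_rieszKernel 4)).continuousOn (inv_pos.mpr hx₀)
  simp only [mellinInv, ← goldfeldIntegrand_eq χ₁ χ₂ hw hx₀.le] at hJ
  have hterm (n : ℕ) : 0 ≤ LSeries.term (goldfeldCoeff χ₁ χ₂) w n * rieszKernel 4 (n * x⁻¹) :=
    mul_nonneg (LSeries.term_nonneg (goldfeldCoeff_nonneg h₁ h₂ n) w)
      (zero_le_real.mpr (rieszKernel_nonneg _ _))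
  constructor
  · refine (integrable_cpow_neg_smul (verticalIntegrable_LSeries_mul ha hφ)
      (inv_pos.mpr hx₀)).congr (.of_forall fun t ↦ ?_)
    exact (goldfeldIntegrand_eq χ₁ χ₂ hw hx₀.le t).symm
  · calc (1 / 384 : ℝ) = rieszKernel 4 2⁻¹ := by norm_num [rieszKernel, Nat.factorial]
      _ ≤ rieszKernel 4 x⁻¹ := antitone_rieszKernel 4 (inv_anti₀ two_pos hx)
      _ = (LSeries.term (goldfeldCoeff χ₁ χ₂) w 1 * rieszKernel 4 ((1 : ℕ) * x⁻¹)).re := by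
        simp [LSeries.term_of_ne_zero, goldfeldCoeff_one]
      _ ≤ _ := (le_def.mp (le_hasSum hJ 1 fun n _ ↦ hterm n)).1
      _ = _ := by simp

end GoldfeldIntegral

/-- There are absolute constants `X, M > 0` such that for all primitive quadratic `χ₁, χ₂`,
all `0 < w < 1` and all `x ≥ X`, the Perron-type integral
`J(x,w) = (1/2π) ∫ f(2+w+it) x^(2+it) / ((2+it)(3+it)(4+it)(5+it)(6+it)) dt`
converges and has real part at least `M`. -/
theorem goldfeldJ_lower_bound :
    ∃ X : ℝ, 0 < X ∧ ∃ M : ℝ, 0 < M ∧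
      ∀ (q₁ q₂ : ℕ) (hq₁ : 1 < q₁) (hq₂ : 1 < q₂),
        haveI : NeZero q₁ := ⟨by omega⟩
        haveI : NeZero q₂ := ⟨by omega⟩
        ∀ (χ₁ : DirichletCharacter ℂ q₁) (χ₂ : DirichletCharacter ℂ q₂),
          χ₁.IsPrimitive → χ₁ ≠ 1 → χ₁ ^ 2 = 1 →
          χ₂.IsPrimitive → χ₂ ≠ 1 → χ₂ ^ 2 = 1 →
            ∀ w : ℝ, 0 < w → w < 1 → ∀ x : ℝ, X ≤ x →
              Integrable (fun t : ℝ =>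
                goldfeldF χ₁ χ₂ (2 + (w : ℂ) + t * I) * (x : ℂ) ^ (2 + t * I) /
                  ((2 + t * I) * (3 + t * I) * (4 + t * I) * (5 + t * I) * (6 + t * I))) ∧
              M ≤ ((1 / (2 * (Real.pi : ℂ))) *
                ∫ t : ℝ, goldfeldF χ₁ χ₂ (2 + (w : ℂ) + t * I) * (x : ℂ) ^ (2 + t * I) /
                  ((2 + t * I) * (3 + t * I) * (4 + t * I) * (5 + t * I) * (6 + t * I))).re := by
  refine ⟨2, two_pos, 1 / 384, by norm_num, ?_⟩
  intro q₁ q₂ hq₁ hq₂ χ₁ χ₂ _ _ h₁ _ _ h₂ w hw _ x hx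
  have : NeZero q₁ := ⟨by omega⟩
  have : NeZero q₂ := ⟨by omega⟩
  exact goldfeldJ_lower_bound_general h₁ h₂ (neg_one_lt_zero.trans hw) hx
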